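/- arXiv:2012.06860 — 4 statements merged into one kernel-verified Lean document; each statement's English description precedes it below -/
import Mathlib

section
/- Let f₀ ≥ 0, e₀ ≥ 0, ε ∈ ℝ, and let Γ ≥ 0, Υ ≥ 0, Λ ≥ 0 and f ∈ ℝ. Set q = f − f₀ and let χ = 1 if q > 0 and χ = 0 otherwise. Define the updated queues Γ' = max(Γ + f − f₀, 0), Υ' = max(Υ + (q − e₀)·χ, 0), Λ' = max(Λ + (χ − ε)·f, 0). Then ½(Γ'² + Υ'² + Λ'²) − ½(Γ² + Υ² + Λ²) ≤ Δ₀ + θ¹·f² + θ²·f, where θ¹ = ½(1 + ε²) + (1 − ε)·χ, θ² = Γ − f₀ − ε·Λ + χ·(Υ + Λ − f₀ − e₀), and Δ₀ = ½f₀² − Γ·f₀ + χ·(½(f₀ + e₀)² − Υ·(f₀ + e₀)). -/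
/-!
Truncation at zero only decreases squares: `(max x 0) ^ 2 ≤ x ^ 2`. Applying this to each of the
three queue updates bounds the drift by the drift of the untruncated updates, and since
`χ ^ 2 = χ` the latter equals `Δ₀ + θ1 * f ^ 2 + θ2 * f` identically.
-/

theorem stmt_2 (f₀ e₀ ε Γ Υ Λ f : ℝ)
    (hf₀ : 0 ≤ f₀) (he₀ : 0 ≤ e₀) (hΓ : 0 ≤ Γ) (hΥ : 0 ≤ Υ) (hΛ : 0 ≤ Λ)
    (q χ : ℝ) (hq : q = f - f₀) (hχ : χ = if q > 0 then 1 else 0)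
    (Γ' Υ' Λ' : ℝ)
    (hΓ' : Γ' = max (Γ + f - f₀) 0)
    (hΥ' : Υ' = max (Υ + (q - e₀) * χ) 0)
    (hΛ' : Λ' = max (Λ + (χ - ε) * f) 0)
    (θ1 θ2 Δ₀ : ℝ)
    (hθ1 : θ1 = (1 + ε ^ 2) / 2 + (1 - ε) * χ)
    (hθ2 : θ2 = Γ - f₀ - ε * Λ + χ * (Υ + Λ - f₀ - e₀))
    (hΔ₀ : Δ₀ = f₀ ^ 2 / 2 - Γ * f₀ + χ * ((f₀ + e₀) ^ 2 / 2 - Υ * (f₀ + e₀))) :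
    (Γ' ^ 2 + Υ' ^ 2 + Λ' ^ 2) / 2 - (Γ ^ 2 + Υ ^ 2 + Λ ^ 2) / 2
      ≤ Δ₀ + θ1 * f ^ 2 + θ2 * f := by
  have key : ∀ x : ℝ, (max x 0) ^ 2 ≤ x ^ 2 := fun x => by
    rcases le_total x 0 with h | h
    · rw [max_eq_right h]; nlinarith [sq_nonneg x]
    · rw [max_eq_left h]
  have h1 := key (Γ + f - f₀)
  have h2 := key (Υ + (q - e₀) * χ)
  have h3 := key (Λ + (χ - ε) * f)
  rw [← hΓ'] at h1
  rw [← hΥ'] at h2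
  rw [← hΛ'] at h3
  have hχ01 : χ = 0 ∨ χ = 1 := by
    rw [hχ]; split_ifs <;> simp
  subst hθ1 hθ2 hΔ₀ hq
  clear hχ hΓ' hΥ' hΛ'
  rcases hχ01 with rfl | rfl <;> linarith
end

section
/- Fix positive reals N, B, N₀, h. The transmission-time function t(p) = N / (B · log₂(1 + h·p / (N₀·B))) is convex on the interval (0, ∞). -/
/-!
Up to the nonnegative constant `N * log 2 / B`, the transmission time is the reciprocal of
`p ↦ log (1 + h * p / (N₀ * B))`. That function is positive on `(0, ∞)`, and concave as the
logarithm of an affine function, so its reciprocal is convex by `convexOn_inv_of_concaveOn_pos`.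
-/

/-- The reciprocal is convex and decreasing on `(0, ∞)`, so composing it with a positive concave
function yields a convex function. -/
lemma convexOn_inv_of_concaveOn_pos {s : Set ℝ} {f : ℝ → ℝ} (hf : ConcaveOn ℝ s f)
    (hpos : ∀ x ∈ s, 0 < f x) : ConvexOn ℝ s (fun x => (f x)⁻¹) := by
  refine ⟨hf.1, fun x hx y hy a b ha hb hab => ?_⟩
  have hconv : ConvexOn ℝ (Set.Ioi 0) (fun u : ℝ => u ^ (-1 : ℤ)) := convexOn_zpow (-1)
  have hmid : 0 < a • f x + b • f y := (convex_Ioi (0 : ℝ)) (hpos x hx) (hpos y hy) ha hb hab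
  calc (f (a • x + b • y))⁻¹ ≤ (a • f x + b • f y)⁻¹ :=
        inv_anti₀ hmid (hf.2 hx hy ha hb hab)
    _ ≤ a • (f x)⁻¹ + b • (f y)⁻¹ := by
        simpa only [zpow_neg_one] using hconv.2 (hpos x hx) (hpos y hy) ha hb hab

theorem stmt_4 (N B N₀ h : ℝ) (hN : 0 < N) (hB : 0 < B) (hN₀ : 0 < N₀) (hh : 0 < h) :
    ConvexOn ℝ (Set.Ioi 0)
      (fun p : ℝ => N / (B * Real.logb 2 (1 + h * p / (N₀ * B)))) := by
  have hpos : ∀ p ∈ Set.Ioi (0 : ℝ), 0 < h * p / (N₀ * B) := fun p hp => by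
    have hp' : 0 < p := hp
    positivity
  have hconc : ConcaveOn ℝ (Set.Ioi 0) (fun p : ℝ => Real.log (1 + h * p / (N₀ * B))) := by
    refine ⟨convex_Ioi 0, fun x hx y hy a b ha hb hab => ?_⟩
    have hx1 : 1 + h * x / (N₀ * B) ∈ Set.Ioi (0 : ℝ) := add_pos one_pos (hpos x hx)
    have hy1 : 1 + h * y / (N₀ * B) ∈ Set.Ioi (0 : ℝ) := add_pos one_pos (hpos y hy)
    convert strictConcaveOn_log_Ioi.concaveOn.2 hx1 hy1 ha hb hab using 2
    simp only [smul_eq_mul]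
    linear_combination -hab
  have hinv := convexOn_inv_of_concaveOn_pos hconc
    fun p hp => Real.log_pos (lt_add_of_pos_right 1 (hpos p hp))
  have hc : 0 ≤ N * Real.log 2 / B := by
    have := Real.log_pos one_lt_two
    positivity
  refine (hinv.smul hc).congr fun p _ => ?_
  simp only [smul_eq_mul, Real.logb, div_eq_mul_inv, mul_inv, inv_inv]
  ring
end

section
/- Fix positive reals N, B, N₀, h. The transmission-energy function E(p) = p · N / (B · log₂(1 + h·p / (N₀·B))) is strictly increasing on (0, ∞). -/
/-! Up to a positive constant, `1 / E(p)` is the slope of the secant of `log` between `1` and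
`1 + h * p / (N₀ * B)`. Since `log` is strictly concave, this slope strictly decreases in `p`
(`StrictConcaveOn.secant_strict_mono`), so `E` strictly increases. -/

theorem stmt_7 (N B N₀ h : ℝ) (hN : 0 < N) (hB : 0 < B) (hN₀ : 0 < N₀) (hh : 0 < h) :
    StrictMonoOn (fun p : ℝ => p * N / (B * Real.logb 2 (1 + h * p / (N₀ * B))))
      (Set.Ioi 0) := by
  intro p hp q hq hpq
  simp only [Set.mem_Ioi] at hp hq
  have hc : 0 < h / (N₀ * B) := by positivity
  have hl2 : 0 < Real.log 2 := Real.log_pos one_lt_two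
  simp only [Real.logb, mul_div_right_comm h _ (N₀ * B)]
  generalize h / (N₀ * B) = c at hc
  have hcp : 0 < c * p := mul_pos hc hp
  have hcq : 0 < c * q := mul_pos hc hq
  have hLp : 0 < Real.log (1 + c * p) := Real.log_pos (by linarith)
  have hLq : 0 < Real.log (1 + c * q) := Real.log_pos (by linarith)
  have hsec := strictConcaveOn_log_Ioi.secant_strict_mono (a := 1) (x := 1 + c * p)
    (y := 1 + c * q) (Set.mem_Ioi.2 one_pos) (Set.mem_Ioi.2 (by linarith))
    (Set.mem_Ioi.2 (by linarith)) (by linarith) (by linarith)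
    (by linarith [mul_lt_mul_of_pos_left hpq hc])
  simp only [Real.log_one, sub_zero, add_sub_cancel_left] at hsec
  rw [div_lt_div_iff₀ hcq hcp] at hsec
  have key : p * Real.log (1 + c * q) < q * Real.log (1 + c * p) := by
    refine lt_of_mul_lt_mul_left ?_ hc.le
    linarith
  rw [div_lt_div_iff₀ (by positivity) (by positivity)]
  have hk : 0 < N * B / Real.log 2 := by positivity
  calc p * N * (B * (Real.log (1 + c * q) / Real.log 2))
      = N * B / Real.log 2 * (p * Real.log (1 + c * q)) := by ring
    _ < N * B / Real.log 2 * (q * Real.log (1 + c * p)) := mul_lt_mul_of_pos_left key hk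
    _ = q * N * (B * (Real.log (1 + c * p) / Real.log 2)) := by ring
end

section
/- Fix positive reals N, B, N₀, h, a real η ≥ 0, and a real m ≥ 1, and let t(p) = N / (B · log₂(1 + h·p / (N₀·B))). Then the function p ↦ (η + t(p))^m / m is convex on (0, ∞). -/
/-!
Up to a positive constant, `t p` is `(log (1 + c p))⁻¹` with `c = h / (N₀ B) > 0`. The logarithm of
a positive affine function is concave and here positive, and `x ↦ x⁻¹` is convex and decreasing on
`(0, ∞)`, so `t` is convex. Finally `x ↦ x ^ m` is convex and increasing on `[0, ∞)` for `1 ≤ m`,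
so composing it with the nonnegative convex function `η + t` keeps convexity.
-/

theorem convexOn_inv_log_one_add_mul {c : ℝ} (hc : 0 < c) :
    ConvexOn ℝ (Set.Ioi 0) (fun p : ℝ => (Real.log (1 + c * p))⁻¹) := by
  have hpos : ∀ p : ℝ, 0 < p → 0 < Real.log (1 + c * p) := fun p hp =>
    Real.log_pos (by nlinarith [mul_pos hc hp])
  refine ⟨convex_Ioi 0, fun x hx y hy a b ha hb hab => ?_⟩
  have hx' : 0 < x := hx
  have hy' : 0 < y := hy
  have hconc := strictConcaveOn_log_Ioi.concaveOn.2
    (show 1 + c * x ∈ Set.Ioi (0 : ℝ) from Set.mem_Ioi.2 (by positivity))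
    (show 1 + c * y ∈ Set.Ioi (0 : ℝ) from Set.mem_Ioi.2 (by positivity)) ha hb hab
  have hinv := (convexOn_zpow (𝕜 := ℝ) (-1)).2 (hpos x hx') (hpos y hy') ha hb hab
  have hmid := convex_Ioi (𝕜 := ℝ) (0 : ℝ) (hpos x hx') (hpos y hy') ha hb hab
  simp only [smul_eq_mul, zpow_neg_one, Set.mem_Ioi] at hconc hinv hmid ⊢
  have haff : a * (1 + c * x) + b * (1 + c * y) = 1 + c * (a * x + b * y) := by
    linear_combination hab
  rw [haff] at hconc
  exact (inv_anti₀ hmid hconc).trans hinv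

theorem stmt_8 (N B N₀ h η m : ℝ) (hN : 0 < N) (hB : 0 < B) (hN₀ : 0 < N₀) (hh : 0 < h)
    (hη : 0 ≤ η) (hm : 1 ≤ m)
    (t : ℝ → ℝ) (ht : ∀ p, t p = N / (B * Real.logb 2 (1 + h * p / (N₀ * B)))) :
    ConvexOn ℝ (Set.Ioi 0) (fun p : ℝ => (η + t p) ^ m / m) := by
  have hc : 0 < h / (N₀ * B) := by positivity
  have hK : 0 < N * Real.log 2 / B := by
    have := Real.log_pos one_lt_two
    positivity
  have ht' : t = fun p => (N * Real.log 2 / B) • (Real.log (1 + h / (N₀ * B) * p))⁻¹ := by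
    funext p
    rw [ht, Real.logb, smul_eq_mul, mul_div_right_comm]
    simp only [div_eq_mul_inv, mul_inv, inv_inv]
    ring
  have htconv : ConvexOn ℝ (Set.Ioi 0) t := by
    rw [ht']
    exact (convexOn_inv_log_one_add_mul hc).smul hK.le
  have htpos : ∀ p : ℝ, 0 < p → 0 ≤ η + t p := by
    intro p hp
    have hlog : 0 < Real.log (1 + h / (N₀ * B) * p) :=
      Real.log_pos (by nlinarith [mul_pos hc hp])
    rw [ht']
    positivity
  refine ⟨convex_Ioi 0, fun x hx y hy a b ha hb hab => ?_⟩
  have hz : 0 < a • x + b • y := convex_Ioi (𝕜 := ℝ) (0 : ℝ) hx hy ha hb hab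
  have hpow := (convexOn_rpow hm).2 (htpos x hx) (htpos y hy) ha hb hab
  have hle : η + t (a • x + b • y) ≤ a • (η + t x) + b • (η + t y) := by
    have := htconv.2 hx hy ha hb hab
    simp only [smul_eq_mul] at this ⊢
    linear_combination this - η * hab
  have hmono := (Real.rpow_le_rpow (htpos _ hz) hle (by linarith : 0 ≤ m)).trans hpow
  simp only [smul_eq_mul] at hmono ⊢
  rw [← mul_div_assoc, ← mul_div_assoc, ← add_div]
  gcongr
end
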